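/- arXiv:2408.06369 — 2 statements merged into one kernel-verified Lean document; each statement's English description precedes it below -/
import Mathlib

section
/- Let 0 < m < n be integers, μ, τ > 0, and suppose the polynomial p_{n,m}(r) = r^n + Γ(1 + m/n) r^{n−m} + 1 has n pairwise distinct complex roots r_1, …, r_n, and let G_{m/n} be the Andrade relaxation modulus; write α = m/n. Then lim_{t → +∞} (t/τ)^{2−α} G_{m/n}(t) = μ α (1 − α), i.e., G_{m/n}(t) ≈ μ α(1−α)(t/τ)^{α−2} as t → +∞. -/
open Filter Set Finset

/-- The two-parameter Mittag–Leffler function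
`E_{α,β}(z) = ∑_{k=0}^∞ z^k / Γ(β + αk)`. -/
noncomputable def mittagLeffler (α β : ℝ) (z : ℂ) : ℂ :=
  ∑' k : ℕ, z ^ k / (Real.Gamma (β + α * k) : ℂ)



/-- vertical part of the contour -/
noncomputable def hkV (φ : ℂ → ℂ) (c : ℝ) : ℂ :=
  Complex.I * ∫ y in (-Real.pi)..Real.pi, φ (c + y * Complex.I)

/-- jump between the two horizontal lines -/
noncomputable def hkPsi (φ : ℂ → ℂ) (v : ℝ) : ℂ :=
  φ (v + (Real.pi : ℝ) * Complex.I) - φ (v + (-Real.pi : ℝ) * Complex.I)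

noncomputable def hkU (φ : ℂ → ℂ) (c : ℝ) : ℂ :=
  hkV φ c + ∫ v in Set.Ioi c, hkPsi φ v

theorem hkU_eq (φ : ℂ → ℂ) (hφ : ∀ w : ℂ, |w.im| ≤ Real.pi → DifferentiableAt ℂ φ w)
    (hψ : MeasureTheory.Integrable (hkPsi φ)) (l : ℂ)
    (hl : Tendsto (hkV φ) atBot (nhds l)) (c : ℝ) :
    hkU φ c = l + ∫ v, hkPsi φ v := by
  have hpi := Real.pi_pos
  have hcl (σ : ℝ) (hσ : |σ| ≤ Real.pi) : Continuous (fun v : ℝ => φ (v + σ * Complex.I)) := by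
    rw [continuous_iff_continuousAt]
    intro v
    have h1 : ContinuousAt φ ((v : ℂ) + σ * Complex.I) := (hφ _ (by simpa using hσ)).continuousAt
    exact ContinuousAt.comp (f := fun v : ℝ => (v : ℂ) + σ * Complex.I) h1 (by fun_prop)
  have hU (c' : ℝ) (hc : c' ≤ c) : hkU φ c = hkU φ c' := by
    have h := Complex.integral_boundary_rect_eq_zero_of_differentiableOn φ
      (⟨c', -Real.pi⟩ : ℂ) ⟨c, Real.pi⟩ (by
        intro w hw
        refine (hφ w ?_).differentiableWithinAt
        have := hw.2
        simp only [Set.mem_preimage] at this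
        rw [Set.uIcc_of_le (by linarith)] at this
        exact abs_le.mpr this)
    simp only [smul_eq_mul] at h
    have h2 : ∫ v in c'..c, hkPsi φ v = (∫ x in c'..c, φ (x + (Real.pi : ℝ) * Complex.I))
        - ∫ x in c'..c, φ (x + (-Real.pi : ℝ) * Complex.I) := by
      unfold hkPsi
      apply intervalIntegral.integral_sub
      · exact (hcl Real.pi (by rw [abs_of_pos hpi])).intervalIntegrable _ _
      · exact (hcl (-Real.pi) (by rw [abs_neg, abs_of_pos hpi])).intervalIntegrable _ _
    have h3 : (∫ v in c'..c, hkPsi φ v) + ∫ v in Ioi c, hkPsi φ v = ∫ v in Ioi c', hkPsi φ v :=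
      intervalIntegral.integral_interval_add_Ioi hψ.integrableOn hψ.integrableOn
    unfold hkU hkV
    rw [← h3, h2]
    linear_combination h
  have hlim : Tendsto (hkU φ) atBot (nhds (l + ∫ v, hkPsi φ v)) := by
    unfold hkU
    refine hl.add ?_
    have h4 (c' : ℝ) : ∫ v in Ioi c', hkPsi φ v = (∫ v, hkPsi φ v) - ∫ v in Iic c', hkPsi φ v := by
      rw [eq_sub_iff_add_eq, add_comm]
      exact intervalIntegral.integral_Iic_add_Ioi hψ.integrableOn hψ.integrableOn
    simp_rw [h4]
    have h5 : Tendsto (fun c' : ℝ => ∫ v in Iic c', hkPsi φ v) atBot (nhds 0) := by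
      have h6 : Tendsto (fun c' : ℝ => (∫ v in Iic 0, hkPsi φ v) - ∫ v in c'..0, hkPsi φ v) atBot (nhds 0) := by
        have := (MeasureTheory.intervalIntegral_tendsto_integral_Iic (0:ℝ) (hψ.integrableOn) tendsto_id)
        simpa using (tendsto_const_nhds (x := ∫ v in Iic 0, hkPsi φ v)).sub this
      refine h6.congr fun c' => ?_
      rw [← intervalIntegral.integral_Iic_sub_Iic hψ.integrableOn hψ.integrableOn]
      ring
    simpa using (tendsto_const_nhds (x := ∫ v, hkPsi φ v)).sub h5
  refine tendsto_nhds_unique (tendsto_const_nhds (x := hkU φ c) (f := atBot)) (hlim.congr' ?_)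
  filter_upwards [eventually_le_atBot c] with c' hc
  exact (hU c' hc).symm

theorem expGamma_integrable (s : ℝ) (hs : 0 < s) :
    MeasureTheory.Integrable (fun v : ℝ => Real.exp (-Real.exp v) * Real.exp (s * v)) := by
  have h := MeasureTheory.integrableOn_image_iff_integrableOn_abs_deriv_smul
    (f := Real.exp) (f' := Real.exp) (s := Set.univ)
    MeasurableSet.univ (fun x _ => (Real.hasDerivAt_exp x).hasDerivWithinAt)
    Real.exp_injective.injOn (fun x : ℝ => Real.exp (-x) * x ^ (s - 1))
  rw [Set.image_univ, Real.range_exp] at h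
  have h2 := h.1 (Real.GammaIntegral_convergent hs)
  rw [MeasureTheory.integrableOn_univ] at h2
  refine h2.congr (MeasureTheory.ae_of_all _ fun v => ?_)
  simp only [abs_of_pos (Real.exp_pos _), smul_eq_mul]
  rw [← Real.exp_mul, mul_left_comm, ← Real.exp_add]
  ring_nf

theorem expGamma_integral (s : ℝ) (hs : 0 < s) :
    ∫ v : ℝ, Real.exp (-Real.exp v) * Real.exp (s * v) = Real.Gamma s := by
  have h := MeasureTheory.integral_image_eq_integral_abs_deriv_smul
    (f := Real.exp) (f' := Real.exp) (s := Set.univ)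
    MeasurableSet.univ (fun x _ => (Real.hasDerivAt_exp x).hasDerivWithinAt)
    Real.exp_injective.injOn (fun x : ℝ => Real.exp (-x) * x ^ (s - 1))
  rw [Set.image_univ, Real.range_exp, ← Real.Gamma_eq_integral hs] at h
  rw [h, MeasureTheory.setIntegral_univ]
  refine MeasureTheory.integral_congr_ae (MeasureTheory.ae_of_all _ fun v => ?_)
  simp only [abs_of_pos (Real.exp_pos _), smul_eq_mul]
  rw [← Real.exp_mul, mul_left_comm (Real.exp v), ← Real.exp_add v]
  ring_nf

/-- Hankel integrand -/
noncomputable def hkPhi (b : ℝ) (w : ℂ) : ℂ :=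
  Complex.exp (Complex.exp w) * Complex.exp ((1 - b) * w)

theorem exp_line (v : ℝ) : Complex.exp (v + (Real.pi : ℝ) * Complex.I) = -(Real.exp v : ℂ) ∧
    Complex.exp (v + (-Real.pi : ℝ) * Complex.I) = -(Real.exp v : ℂ) := by
  constructor
  · rw [Complex.exp_add, Complex.exp_pi_mul_I]; simp
  · rw [Complex.exp_add]
    push_cast
    rw [neg_mul, Complex.exp_neg, Complex.exp_pi_mul_I]
    norm_num

theorem hkPhi_psi (b v : ℝ) : hkPsi (hkPhi b) v =
    ((Real.exp (-Real.exp v) * Real.exp ((1 - b) * v) : ℝ) : ℂ) *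
      (2 * Complex.I * (Real.sin (Real.pi * b) : ℝ)) := by
  unfold hkPsi hkPhi
  rw [(exp_line v).1, (exp_line v).2]
  have h1 (σ : ℝ) : Complex.exp ((1 - b) * (v + σ * Complex.I)) =
      Complex.exp ((1-b) * v) * Complex.exp (((1-b) * σ : ℝ) * Complex.I) := by
    rw [← Complex.exp_add]; push_cast; ring_nf
  rw [h1, h1]
  simp only [Complex.exp_mul_I, ← Complex.ofReal_cos, ← Complex.ofReal_sin]
  have e1 : (1 - b) * -Real.pi = -((1-b) * Real.pi) := by ring
  have e2 : (1 - b) * Real.pi = Real.pi - Real.pi * b := by ring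
  rw [e1, Real.cos_neg, Real.sin_neg, e2, Real.sin_pi_sub]
  push_cast
  ring

theorem hkPhi_deriv (b : ℝ) (w : ℂ) : HasDerivAt (hkPhi (b + 1)) (hkPhi b w - b * hkPhi (b + 1) w) w := by
  unfold hkPhi
  have h1 : HasDerivAt (fun w : ℂ => Complex.exp (Complex.exp w)) (Complex.exp (Complex.exp w) * Complex.exp w) w :=
    (Complex.hasDerivAt_exp w).cexp
  have h2 : HasDerivAt (fun w : ℂ => Complex.exp ((1 - ((b + 1 : ℝ) : ℂ)) * w))
      (Complex.exp ((1 - ((b + 1 : ℝ) : ℂ)) * w) * ((1 - ((b + 1 : ℝ) : ℂ)) * 1)) w :=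
    ((hasDerivAt_id w).const_mul _).cexp
  refine (h1.mul h2).congr_deriv ?_
  have : Complex.exp ((1 - b) * w) = Complex.exp w * Complex.exp ((1 - ((b + 1 : ℝ) : ℂ)) * w) := by
    rw [← Complex.exp_add]; push_cast; ring_nf
  rw [this]
  push_cast
  ring

theorem hkPhi_cont (b : ℝ) : Continuous (hkPhi b) := by
  unfold hkPhi; fun_prop

theorem hkPhi_integrableOn (b c : ℝ) (hb : 0 < b) : MeasureTheory.IntegrableOn
    (fun v : ℝ => Real.exp (-Real.exp v) * Real.exp ((1 - b) * v)) (Set.Ioi c) := by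
  refine MeasureTheory.Integrable.mono' (g := fun v => Real.exp (-(b * c)) * (Real.exp (-Real.exp v) * Real.exp (1 * v))) ?_ ?_ ?_
  · exact ((expGamma_integrable 1 one_pos).const_mul _).integrableOn
  · exact Continuous.aestronglyMeasurable (by fun_prop)
  · refine (MeasureTheory.ae_restrict_iff' measurableSet_Ioi).2 (MeasureTheory.ae_of_all _ fun v hv => ?_)
    rw [Real.norm_of_nonneg (by positivity), mul_left_comm, ← Real.exp_add (-(b*c))]
    gcongr
    have : b * c ≤ b * v := by
      apply mul_le_mul_of_nonneg_left (le_of_lt hv) hb.le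
    linarith

theorem hkPhi_psi_integrableOn (b c : ℝ) (hb : 0 < b) : MeasureTheory.IntegrableOn
    (hkPsi (hkPhi b)) (Set.Ioi c) := by
  have := (hkPhi_integrableOn b c hb).ofReal (𝕜 := ℂ)
  refine (this.mul_const (2 * Complex.I * (Real.sin (Real.pi * b) : ℝ))).congr (MeasureTheory.ae_of_all _ fun v => ?_)
  simp only [hkPhi_psi]
  rfl

theorem hkPhi_step (b c : ℝ) (hb : 0 < b) : hkU (hkPhi b) c = b * hkU (hkPhi (b + 1)) c := by
  -- vertical
  have hV : hkV (hkPhi b) c - b * hkV (hkPhi (b+1)) c = hkPsi (hkPhi (b+1)) c := by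
    unfold hkV hkPsi
    have h : ∫ y in (-Real.pi)..Real.pi, (Complex.I * (hkPhi b (c + y * Complex.I) - b * hkPhi (b+1) (c + y * Complex.I)))
        = hkPhi (b+1) (c + (Real.pi : ℝ) * Complex.I) - hkPhi (b+1) (c + (-Real.pi : ℝ) * Complex.I) := by
      refine intervalIntegral.integral_eq_sub_of_hasDerivAt
        (f := fun y : ℝ => hkPhi (b+1) (c + y * Complex.I)) (fun y _ => ?_) ?_
      · have h1 : HasDerivAt (fun y : ℝ => (c : ℂ) + y * Complex.I) (1 * Complex.I) y :=
          ((Complex.ofRealCLM.hasDerivAt (x := y)).mul_const Complex.I).const_add _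
        have := (hkPhi_deriv b (c + y * Complex.I)).comp y h1
        rw [one_mul, mul_comm] at this
        exact this
      · apply Continuous.intervalIntegrable
        have := hkPhi_cont b
        have := hkPhi_cont (b+1)
        fun_prop
    rw [← h, intervalIntegral.integral_const_mul, intervalIntegral.integral_sub,
      intervalIntegral.integral_const_mul]
    · ring
    · apply Continuous.intervalIntegrable
      have := hkPhi_cont b
      fun_prop
    · apply Continuous.intervalIntegrable
      have := hkPhi_cont (b+1)
      fun_prop
  have i1 := hkPhi_psi_integrableOn b c hb
  have i2 := hkPhi_psi_integrableOn (b+1) c (by linarith)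
  have hH : (∫ v in Set.Ioi c, hkPsi (hkPhi b) v) - b * ∫ v in Set.Ioi c, hkPsi (hkPhi (b+1)) v
      = - hkPsi (hkPhi (b+1)) c := by
    rw [← MeasureTheory.integral_const_mul, ← MeasureTheory.integral_sub i1 (i2.const_mul _)]
    have := MeasureTheory.integral_Ioi_of_hasDerivAt_of_tendsto' (a := c) (f := hkPsi (hkPhi (b+1)))
      (f' := fun v => hkPsi (hkPhi b) v - b * hkPsi (hkPhi (b+1)) v) (m := 0) (fun v _ => ?_)
      (i1.sub (i2.const_mul _)) ?_
    · rw [this, zero_sub]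
    · have h1 (σ : ℝ) : HasDerivAt (fun v : ℝ => (v : ℂ) + σ * Complex.I) 1 v :=
        (Complex.ofRealCLM.hasDerivAt (x := v)).add_const _
      have hh (σ : ℝ) := (hkPhi_deriv b (v + σ * Complex.I)).comp v (h1 σ)
      have := (hh Real.pi).sub (hh (-Real.pi))
      refine this.congr_deriv ?_
      unfold hkPsi
      ring
    · have h0 : Tendsto (fun v : ℝ => Real.exp (-Real.exp v) * Real.exp ((1 - (b+1)) * v)) atTop (nhds 0) := by
        have a1 : Tendsto (fun v : ℝ => Real.exp (-Real.exp v)) atTop (nhds 0) :=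
          Real.tendsto_exp_neg_atTop_nhds_zero.comp Real.tendsto_exp_atTop
        have a2 : Tendsto (fun v : ℝ => Real.exp ((1 - (b+1)) * v)) atTop (nhds 0) := by
          apply Real.tendsto_exp_atBot.comp
          exact tendsto_id.const_mul_atTop_of_neg (by linarith)
        simpa using a1.mul a2
      have h2 := ((Complex.continuous_ofReal.tendsto 0).comp h0).mul_const (2 * Complex.I * (Real.sin (Real.pi * (b+1)) : ℝ))
      simp only [Complex.ofReal_zero, zero_mul] at h2
      refine h2.congr fun v => ?_
      rw [hkPhi_psi]; rfl
  unfold hkU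
  linear_combination hV + hH

theorem hkPhi_base (b c : ℝ) (hb : 0 < b) (hb1 : b ≤ 1) :
    hkU (hkPhi b) c = 2 * Real.pi * Complex.I / (Real.Gamma b : ℂ) := by
  have hd : ∀ w : ℂ, |w.im| ≤ Real.pi → DifferentiableAt ℂ (hkPhi b) w := by
    intro w _; unfold hkPhi; fun_prop
  rcases hb1.lt_or_eq with h1 | rfl
  · have hl : Tendsto (hkV (hkPhi b)) atBot (nhds 0) := by
      have h0 : Tendsto (fun c : ℝ => (Real.exp (Real.exp c) * Real.exp ((1-b) * c)) * |Real.pi - -Real.pi|) atBot (nhds 0) := by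
        have a1 : Tendsto (fun v : ℝ => Real.exp (Real.exp v)) atBot (nhds (Real.exp 0)) :=
          (Real.continuous_exp.tendsto 0).comp Real.tendsto_exp_atBot
        have a2 : Tendsto (fun v : ℝ => Real.exp ((1 - b) * v)) atBot (nhds 0) := by
          apply Real.tendsto_exp_atBot.comp
          exact tendsto_id.const_mul_atBot (by linarith)
        simpa using (a1.mul a2).mul_const |Real.pi - -Real.pi|
      refine squeeze_zero_norm (fun c => ?_) h0
      unfold hkV
      rw [norm_mul, Complex.norm_I, one_mul]
      refine intervalIntegral.norm_integral_le_of_norm_le_const fun y _ => ?_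
      unfold hkPhi
      rw [norm_mul, Complex.norm_exp, Complex.norm_exp]
      gcongr
      · refine (Complex.re_le_norm _).trans ?_
        rw [Complex.norm_exp]; simp
      · simp
    have hi : MeasureTheory.Integrable (hkPsi (hkPhi b)) := by
      have := ((expGamma_integrable (1-b) (by linarith)).ofReal (𝕜 := ℂ)).mul_const (2 * Complex.I * (Real.sin (Real.pi * b) : ℝ))
      refine this.congr (MeasureTheory.ae_of_all _ fun v => ?_)
      simp only [hkPhi_psi]; rfl
    rw [hkU_eq _ hd hi 0 hl, zero_add]
    simp_rw [hkPhi_psi]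
    rw [MeasureTheory.integral_mul_const, integral_complex_ofReal, expGamma_integral _ (by linarith)]
    have hs : Real.sin (Real.pi * b) ≠ 0 := by
      apply ne_of_gt
      apply Real.sin_pos_of_pos_of_lt_pi
      · positivity
      · nlinarith [Real.pi_pos]
    have hr := Real.Gamma_mul_Gamma_one_sub b
    rw [mul_comm Real.pi b] at hs ⊢
    rw [mul_comm Real.pi b] at hr
    have hg : Real.Gamma b ≠ 0 := (Real.Gamma_pos_of_pos hb).ne'
    have hr2 : Real.Gamma (1 - b) * Real.sin (b * Real.pi) = Real.pi / Real.Gamma b := by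
      rw [eq_div_iff hs] at hr
      rw [eq_div_iff hg]
      linarith
    have hr3 : (Real.Gamma (1 - b) : ℂ) * (Real.sin (b * Real.pi) : ℝ) = (Real.pi : ℂ) / (Real.Gamma b : ℂ) := by
      exact_mod_cast hr2
    linear_combination 2 * Complex.I * hr3
  · have hz : hkPsi (hkPhi 1) = fun _ => 0 := by
      funext v; rw [hkPhi_psi]; simp
    have hi : MeasureTheory.Integrable (hkPsi (hkPhi 1)) := by
      rw [hz]; exact MeasureTheory.integrable_zero _ _ _
    have hl : Tendsto (hkV (hkPhi 1)) atBot (nhds (Complex.I * ∫ y in (-Real.pi)..Real.pi, (1:ℂ))) := by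
      unfold hkV
      refine Tendsto.const_mul _ ?_
      refine intervalIntegral.tendsto_integral_filter_of_dominated_convergence (fun _ => Real.exp 1) ?_ ?_ ?_ ?_
      · refine Eventually.of_forall fun c => Continuous.aestronglyMeasurable ?_
        have := hkPhi_cont 1
        fun_prop
      · filter_upwards [eventually_le_atBot 0] with c hc
        refine MeasureTheory.ae_of_all _ fun y _ => ?_
        unfold hkPhi
        simp only [Complex.ofReal_one, sub_self, zero_mul, Complex.exp_zero, mul_one]
        rw [Complex.norm_exp]
        gcongr
        refine (Complex.re_le_norm _).trans ?_
        rw [Complex.norm_exp]; simpa using hc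
      · exact intervalIntegrable_const
      · refine MeasureTheory.ae_of_all _ fun y _ => ?_
        unfold hkPhi
        simp only [Complex.ofReal_one, sub_self, zero_mul, Complex.exp_zero, mul_one]
        rw [← Complex.exp_zero]
        refine (Complex.continuous_exp.tendsto 0).comp ?_
        rw [tendsto_zero_iff_norm_tendsto_zero]
        refine Real.tendsto_exp_atBot.congr fun c => ?_
        rw [Complex.norm_exp]; simp
    rw [hkU_eq _ hd hi _ hl, hz]
    simp
    ring

theorem hkPhi_hankel (b c : ℝ) (hb : 0 < b) :
    hkU (hkPhi b) c = 2 * Real.pi * Complex.I / (Real.Gamma b : ℂ) := by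
  have key : ∀ N : ℕ, ∀ b : ℝ, 0 < b → b ≤ N + 1 →
      hkU (hkPhi b) c = 2 * Real.pi * Complex.I / (Real.Gamma b : ℂ) := by
    intro N
    induction N with
    | zero => intro b hb h; exact hkPhi_base b c hb (by simpa using h)
    | succ k ih =>
      intro b hb h
      by_cases h1 : b ≤ 1
      · exact hkPhi_base b c hb h1
      · push Not at h1
        have h2 := ih (b - 1) (by linarith) (by push_cast at h; linarith)
        rw [hkPhi_step _ _ (by linarith), sub_add_cancel] at h2
        have h3 := Real.Gamma_add_one (s := b - 1) (by linarith)
        rw [sub_add_cancel] at h3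
        have hg : (Real.Gamma (b-1) : ℂ) ≠ 0 := by
          exact_mod_cast (Real.Gamma_pos_of_pos (by linarith)).ne'
        have hb' : ((b - 1 : ℝ) : ℂ) ≠ 0 := by exact_mod_cast (by linarith : b - 1 ≠ 0)
        rw [h3, Complex.ofReal_mul]
        apply mul_left_cancel₀ hb'
        rw [h2]
        field_simp
  exact key ⌈b⌉₊ b hb (by linarith [Nat.le_ceil b])

/-- integrand for the Mittag-Leffler function -/
noncomputable def hkZ (n : ℕ) (z : ℂ) (w : ℂ) : ℂ :=
  Complex.exp (Complex.exp w) * Complex.exp w / (Complex.exp (w / n) - z)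

theorem hkPhi_pow (n : ℕ) (z w : ℂ) (N : ℕ) :
    z ^ N * hkPhi (1 / n + 1 / n * N) w = Complex.exp (Complex.exp w) * Complex.exp w *
      ((Complex.exp (w / n))⁻¹ * (z / Complex.exp (w / n)) ^ N) := by
  unfold hkPhi
  have : Complex.exp ((1 - ((1 / n + 1 / n * N : ℝ) : ℂ)) * w) =
      Complex.exp w * ((Complex.exp (w / n))⁻¹ * ((Complex.exp (w / n))⁻¹) ^ N) := by
    rw [← Complex.exp_neg, ← Complex.exp_nat_mul, ← Complex.exp_add, ← Complex.exp_add]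
    push_cast
    ring_nf
  rw [this, div_eq_mul_inv z, mul_pow]
  ring

theorem hkZ_hasSum (n : ℕ) (z w : ℂ) (h : ‖z‖ < Real.exp (w.re / n)) :
    HasSum (fun N : ℕ => z ^ N * hkPhi (1 / n + 1 / n * N) w) (hkZ n z w) := by
  simp_rw [hkPhi_pow]
  have hu := Complex.exp_ne_zero (w / n)
  have hn : ‖Complex.exp (w / n)‖ = Real.exp (w.re / n) := by
    rw [Complex.norm_exp]; simp
  have hq : ‖z / Complex.exp (w / n)‖ < 1 := by
    rw [norm_div, hn, div_lt_one (Real.exp_pos _)]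
    exact h
  have hs := ((hasSum_geometric_of_norm_lt_one hq).mul_left ((Complex.exp (w / n))⁻¹)).mul_left
    (Complex.exp (Complex.exp w) * Complex.exp w)
  have he : Complex.exp (Complex.exp w) * Complex.exp w *
      ((Complex.exp (w / n))⁻¹ * (1 - z / Complex.exp (w / n))⁻¹) = hkZ n z w := by
    unfold hkZ
    rw [← mul_inv, mul_sub, mul_one, mul_div_cancel₀ _ hu]
    rfl
  rw [← he]
  exact hs

theorem hkPhi_bound (n : ℕ) (z w : ℂ) (c : ℝ) (hc : c ≤ w.re) (N : ℕ) :
    ‖z ^ N * hkPhi (1 / n + 1 / n * N) w‖ ≤ Real.exp (Complex.exp w).re * Real.exp w.re *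
      ((Real.exp (c / n))⁻¹ * (‖z‖ / Real.exp (c / n)) ^ N) := by
  have hn : ‖Complex.exp (w / n)‖ = Real.exp (w.re / n) := by
    rw [Complex.norm_exp]; simp
  rw [hkPhi_pow, norm_mul, norm_mul, norm_mul, norm_inv, norm_pow, norm_div, hn, Complex.norm_exp,
    Complex.norm_exp]
  gcongr

theorem mittagLeffler_eq_hkU (n : ℕ) (hn : 0 < n) (z : ℂ) (c : ℝ) (h : ‖z‖ < Real.exp (c / n)) :
    mittagLeffler (1 / n) (1 / n) z * (2 * Real.pi * Complex.I) = hkU (hkZ n z) c := by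
  have hq : ‖z‖ / Real.exp (c / n) < 1 := by rwa [div_lt_one (Real.exp_pos _)]
  have hq0 : 0 ≤ ‖z‖ / Real.exp (c / n) := by positivity
  have hgeo := (summable_geometric_of_lt_one hq0 hq).mul_left (Real.exp (c / n))⁻¹
  have hre (v σ : ℝ) : ((v : ℂ) + σ * Complex.I).re = v := by simp
  have hmono (v : ℝ) (hv : c ≤ v) : ‖z‖ < Real.exp (v / n) := by
    refine h.trans_le ?_
    gcongr
  have hV : HasSum (fun N : ℕ => z ^ N * hkV (hkPhi (1 / n + 1 / n * N)) c) (hkV (hkZ n z) c) := by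
    have := intervalIntegral.hasSum_integral_of_dominated_convergence (μ := MeasureTheory.volume)
      (a := -Real.pi) (b := Real.pi)
      (F := fun (N : ℕ) (y : ℝ) => z ^ N * hkPhi (1 / n + 1 / n * N) (c + y * Complex.I))
      (f := fun y : ℝ => hkZ n z (c + y * Complex.I))
      (fun N y => Real.exp (Real.exp c) * Real.exp c *
        ((Real.exp (c / n))⁻¹ * (‖z‖ / Real.exp (c / n)) ^ N)) ?_ ?_ ?_ ?_ ?_
    · have h2 := this.mul_left Complex.I
      unfold hkV
      refine h2.congr_fun ?_
      intro N
      rw [intervalIntegral.integral_const_mul]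
      ring
    · intro N
      apply Continuous.aestronglyMeasurable
      have := hkPhi_cont (1 / n + 1 / n * N)
      fun_prop
    · intro N
      refine MeasureTheory.ae_of_all _ fun y _ => ?_
      refine (hkPhi_bound n z _ c (hre c y).ge N).trans ?_
      rw [hre]
      gcongr
      refine (Complex.re_le_norm _).trans ?_
      rw [Complex.norm_exp, hre]
    · exact MeasureTheory.ae_of_all _ fun y _ => hgeo.mul_left _
    · exact intervalIntegrable_const
    · refine MeasureTheory.ae_of_all _ fun y _ => ?_
      exact hkZ_hasSum n z _ (by rw [hre]; exact h)
  have hH : HasSum (fun N : ℕ => z ^ N * ∫ v in Set.Ioi c, hkPsi (hkPhi (1 / n + 1 / n * N)) v)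
      (∫ v in Set.Ioi c, hkPsi (hkZ n z) v) := by
    have := MeasureTheory.hasSum_integral_of_dominated_convergence
      (μ := MeasureTheory.volume.restrict (Set.Ioi c))
      (F := fun (N : ℕ) (v : ℝ) => z ^ N * hkPsi (hkPhi (1 / n + 1 / n * N)) v)
      (f := fun v : ℝ => hkPsi (hkZ n z) v)
      (fun N v => (2 * (Real.exp (-Real.exp v) * Real.exp (1 * v))) *
        ((Real.exp (c / n))⁻¹ * (‖z‖ / Real.exp (c / n)) ^ N)) ?_ ?_ ?_ ?_ ?_
    · refine this.congr_fun ?_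
      intro N
      rw [MeasureTheory.integral_const_mul]
    · intro N
      apply Continuous.aestronglyMeasurable
      have := hkPhi_cont (1 / n + 1 / n * N)
      unfold hkPsi
      fun_prop
    · intro N
      refine (MeasureTheory.ae_restrict_iff' measurableSet_Ioi).2 (MeasureTheory.ae_of_all _ fun v hv => ?_)
      have b1 := hkPhi_bound n z (v + (Real.pi : ℝ) * Complex.I) c (by rw [hre]; exact le_of_lt hv) N
      have b2 := hkPhi_bound n z (v + (-Real.pi : ℝ) * Complex.I) c (by rw [hre]; exact le_of_lt hv) N
      rw [hre, (exp_line v).1] at b1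
      rw [hre, (exp_line v).2] at b2
      rw [← Complex.ofReal_neg, Complex.ofReal_re] at b1 b2
      unfold hkPsi
      rw [mul_sub, one_mul]
      refine (norm_sub_le _ _).trans ?_
      linarith
    · exact MeasureTheory.ae_of_all _ fun y => hgeo.mul_left _
    · simp_rw [tsum_mul_left]
      exact (((expGamma_integrable 1 one_pos).const_mul 2).mul_const _).integrableOn
    · refine (MeasureTheory.ae_restrict_iff' measurableSet_Ioi).2 (MeasureTheory.ae_of_all _ fun v hv => ?_)
      have s1 := hkZ_hasSum n z (v + (Real.pi : ℝ) * Complex.I) (by rw [hre]; exact hmono v (le_of_lt hv))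
      have s2 := hkZ_hasSum n z (v + (-Real.pi : ℝ) * Complex.I) (by rw [hre]; exact hmono v (le_of_lt hv))
      refine (s1.sub s2).congr_fun ?_
      intro N
      unfold hkPsi
      ring
  have hU := hV.add hH
  unfold mittagLeffler
  rw [← tsum_mul_right]
  change _ = hkV (hkZ n z) c + ∫ v in Set.Ioi c, hkPsi (hkZ n z) v
  rw [← hU.tsum_eq]
  refine tsum_congr fun N => ?_
  have hk := hkPhi_hankel (1 / n + 1 / n * N) c (by positivity)
  unfold hkU at hk
  rw [← mul_add, hk]
  ring

theorem line_dist (n : ℕ) (z : ℂ) (hz0 : z ≠ 0) (σ : ℝ)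
    (hz : ∀ v : ℝ, Complex.exp ((v + σ * Complex.I) / n) ≠ z) (hn : 0 < n) :
    ∃ δ > 0, ∀ v : ℝ, δ ≤ ‖Complex.exp ((v + σ * Complex.I) / n) - z‖ := by
  have hn' : (n : ℝ) ≠ 0 := by positivity
  set ζ : ℂ := Complex.exp ((σ / n : ℝ) * Complex.I) with hζ
  have hζ1 : ‖ζ‖ = 1 := Complex.norm_exp_ofReal_mul_I _
  have hζ0 : ζ ≠ 0 := Complex.exp_ne_zero _
  have hexp (v : ℝ) : Complex.exp ((v + σ * Complex.I) / n) = (Real.exp (v / n) : ℂ) * ζ := by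
    rw [hζ, Complex.ofReal_exp, ← Complex.exp_add]
    push_cast
    ring_nf
  let S : Set ℂ := {u | u.im = 0 ∧ 0 ≤ u.re}
  have hS : IsClosed S := by
    refine IsClosed.inter ?_ ?_
    · exact isClosed_eq Complex.continuous_im continuous_const
    · exact isClosed_le continuous_const Complex.continuous_re
  have hω : z / ζ ∉ S := by
    rintro ⟨h1, h2⟩
    have e : z / ζ = ((z / ζ).re : ℂ) := by
      apply Complex.ext <;> simp [h1]
    have h3 : 0 < (z / ζ).re := by
      refine lt_of_le_of_ne h2 fun h4 => ?_
      rw [← h4, Complex.ofReal_zero] at e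
      exact div_ne_zero hz0 hζ0 e
    apply hz (n * Real.log (z / ζ).re)
    rw [hexp, mul_div_cancel_left₀ _ hn', Real.exp_log h3, ← e, div_mul_cancel₀ _ hζ0]
  have hne : S.Nonempty := ⟨0, by simp [S]⟩
  refine ⟨Metric.infDist (z / ζ) S, (hS.notMem_iff_infDist_pos hne).1 hω, fun v => ?_⟩
  have hm : ((Real.exp (v / n) : ℝ) : ℂ) ∈ S := ⟨Complex.ofReal_im _, by
    rw [Complex.ofReal_re]; exact (Real.exp_pos _).le⟩
  refine (Metric.infDist_le_dist_of_mem hm).trans ?_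
  rw [dist_comm, dist_eq_norm, hexp]
  have : (Real.exp (v / n) : ℂ) * ζ - z = ((Real.exp (v / n) : ℂ) - z / ζ) * ζ := by
    rw [sub_mul, div_mul_cancel₀ _ hζ0]
  rw [this, norm_mul, hζ1, mul_one]

theorem hkZ_psi (n : ℕ) (z : ℂ) (v : ℝ) : hkPsi (hkZ n z) v =
    ((Real.exp (-Real.exp v) * Real.exp v : ℝ) : ℂ) * (-1) *
      ((Complex.exp ((v + (Real.pi : ℝ) * Complex.I) / n) - z)⁻¹ -
       (Complex.exp ((v + (-Real.pi : ℝ) * Complex.I) / n) - z)⁻¹) := by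
  unfold hkPsi hkZ
  rw [(exp_line v).1, (exp_line v).2]
  push_cast
  ring

theorem mittagLeffler_integral (n : ℕ) (hn : 0 < n) (z : ℂ) (hz0 : z ≠ 0)
    (hz : ∀ w : ℂ, |w.im| ≤ Real.pi → Complex.exp (w / n) ≠ z) :
    MeasureTheory.Integrable (hkPsi (hkZ n z)) ∧
    mittagLeffler (1 / n) (1 / n) z * (2 * Real.pi * Complex.I) = ∫ v, hkPsi (hkZ n z) v := by
  have hpi := Real.pi_pos
  have hn' : (0:ℝ) < n := by positivity
  have z1 (v : ℝ) : Complex.exp ((v + (Real.pi : ℝ) * Complex.I) / n) ≠ z :=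
    hz _ (by simp [abs_of_pos hpi])
  have z2 (v : ℝ) : Complex.exp ((v + (-Real.pi : ℝ) * Complex.I) / n) ≠ z :=
    hz _ (by simp [abs_of_pos hpi])
  obtain ⟨δ1, hδ1, h1⟩ := line_dist n z hz0 Real.pi z1 hn
  obtain ⟨δ2, hδ2, h2⟩ := line_dist n z hz0 (-Real.pi) z2 hn
  have hintg : MeasureTheory.Integrable (hkPsi (hkZ n z)) := by
    refine MeasureTheory.Integrable.mono' (g := fun v => (Real.exp (-Real.exp v) * Real.exp (1 * v)) * (δ1⁻¹ + δ2⁻¹)) ?_ ?_ ?_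
    · exact (expGamma_integrable 1 one_pos).mul_const _
    · apply Continuous.aestronglyMeasurable
      have : hkPsi (hkZ n z) = _ := funext (hkZ_psi n z)
      rw [this]
      refine Continuous.mul (by fun_prop) (Continuous.sub ?_ ?_)
      · exact Continuous.inv₀ (by fun_prop) fun v => sub_ne_zero.2 (z1 v)
      · exact Continuous.inv₀ (by fun_prop) fun v => sub_ne_zero.2 (z2 v)
    · refine MeasureTheory.ae_of_all _ fun v => ?_
      rw [hkZ_psi, norm_mul, norm_mul, Complex.norm_real, Real.norm_of_nonneg (by positivity), one_mul]
      simp only [norm_neg, norm_one, mul_one]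
      gcongr
      refine (norm_sub_le _ _).trans ?_
      rw [norm_inv, norm_inv]
      gcongr
      · exact h1 v
      · exact h2 v
  refine ⟨hintg, ?_⟩
  have hl : Tendsto (hkV (hkZ n z)) atBot (nhds 0) := by
    have hzn : 0 < ‖z‖ := norm_pos_iff.2 hz0
    have h0 : Tendsto (fun c : ℝ => (Real.exp (Real.exp c) * Real.exp c / (‖z‖ - Real.exp (c / n))) * |Real.pi - -Real.pi|) atBot (nhds 0) := by
      have a1 : Tendsto (fun v : ℝ => Real.exp (Real.exp v)) atBot (nhds (Real.exp 0)) :=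
        (Real.continuous_exp.tendsto 0).comp Real.tendsto_exp_atBot
      have a2 : Tendsto (fun v : ℝ => ‖z‖ - Real.exp (v / n)) atBot (nhds (‖z‖ - 0)) := by
        apply tendsto_const_nhds.sub
        exact Real.tendsto_exp_atBot.comp (tendsto_id.atBot_div_const hn')
      have := ((a1.mul Real.tendsto_exp_atBot).div a2 (by simpa using hz0)).mul_const |Real.pi - -Real.pi|
      simpa using this
    have a3 : ∀ᶠ c : ℝ in atBot, Real.exp (c / n) < ‖z‖ :=
      (Real.tendsto_exp_atBot.comp (tendsto_id.atBot_div_const hn')).eventually (gt_mem_nhds hzn)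
    refine squeeze_zero_norm' ?_ h0
    filter_upwards [a3] with c hc
    unfold hkV
    rw [norm_mul, Complex.norm_I, one_mul]
    refine intervalIntegral.norm_integral_le_of_norm_le_const fun y _ => ?_
    unfold hkZ
    rw [norm_div, norm_mul, Complex.norm_exp, Complex.norm_exp]
    have hre : ((c : ℂ) + y * Complex.I).re = c := by simp
    have hpos : 0 < ‖z‖ - Real.exp (c / n) := by linarith
    gcongr
    · refine (Complex.re_le_norm _).trans ?_
      rw [Complex.norm_exp, hre]
    · rw [hre]
    · have := norm_sub_norm_le z (Complex.exp ((c + y * Complex.I) / n))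
      rw [norm_sub_rev] at this
      refine le_trans ?_ this
      rw [Complex.norm_exp, Complex.div_natCast_re, hre]
  have hd : ∀ w : ℂ, |w.im| ≤ Real.pi → DifferentiableAt ℂ (hkZ n z) w := by
    intro w hw
    unfold hkZ
    refine DifferentiableAt.div (by fun_prop) (by fun_prop) (sub_ne_zero.2 (hz w hw))
  have hc : ‖z‖ < Real.exp (n * Real.log (‖z‖ + 1) / n) := by
    rw [mul_div_cancel_left₀ _ hn'.ne', Real.exp_log (by positivity)]
    linarith
  rw [mittagLeffler_eq_hkU n hn z _ hc, hkU_eq _ hd hintg 0 hl, zero_add]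

theorem andrade_partial_fractions (m n : ℕ) (hm : 0 < m) (hmn : m < n) (γ : ℂ)
    (r : Fin n → ℂ) (hr : Function.Injective r)
    (hroot : ∀ k, r k ^ n + γ * r k ^ (n - m) + 1 = 0) (x : ℂ) (hx : ∀ k, x ≠ r k) :
    ∑ k, (x - r k)⁻¹ / ((n : ℂ) * r k ^ (n - 1) + γ * ((n : ℂ) - m) * r k ^ (n - m - 1)) =
      (x ^ n + γ * x ^ (n - m) + 1)⁻¹ := by
  classical
  let P : Polynomial ℂ := Polynomial.X ^ n + (Polynomial.C γ * Polynomial.X ^ (n - m) + 1)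
  have hdeg : (Polynomial.C γ * Polynomial.X ^ (n - m) + 1 : Polynomial ℂ).degree < n := by
    refine (Polynomial.degree_add_le _ _).trans_lt (max_lt ?_ ?_)
    · refine (Polynomial.degree_C_mul_X_pow_le _ _).trans_lt ?_
      exact_mod_cast (by omega : n - m < n)
    · refine Polynomial.degree_one_le.trans_lt ?_
      exact_mod_cast (by omega : 0 < n)
  have hPm : P.Monic := Polynomial.monic_X_pow_add hdeg
  have hPd : P.degree = n := by
    rw [Polynomial.degree_add_eq_left_of_degree_lt (by rwa [Polynomial.degree_X_pow]),
      Polynomial.degree_X_pow]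
  have hev (y : ℂ) : P.eval y = y ^ n + γ * y ^ (n - m) + 1 := by
    simp [P, add_assoc]
  have hP : Lagrange.nodal Finset.univ r = P := by
    refine Polynomial.eq_of_degree_sub_lt_of_eval_index_eq (v := r) Finset.univ hr.injOn ?_ ?_
    · have := Polynomial.degree_sub_lt_left (p := Lagrange.nodal Finset.univ r) (q := P)
        (by rw [Lagrange.degree_nodal, hPd]; simp) Lagrange.nodal_ne_zero
        (by rw [hPm.leadingCoeff, (Lagrange.nodal_monic).leadingCoeff])
      rwa [Lagrange.degree_nodal] at this
    · intro i _
      rw [Lagrange.eval_nodal_at_node (Finset.mem_univ i), hev, hroot]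
  have hne : (Finset.univ : Finset (Fin n)).Nonempty := ⟨⟨0, by omega⟩, Finset.mem_univ _⟩
  have h1 := Lagrange.eval_interpolate_not_at_node (s := Finset.univ) (v := r) (1 : Fin n → ℂ) (x := x)
    (fun i _ => hx i)
  rw [Lagrange.interpolate_one hr.injOn hne, Polynomial.eval_one, hP, hev] at h1
  have h2 := inv_eq_of_mul_eq_one_right h1.symm
  rw [h2]
  refine Finset.sum_congr rfl fun k _ => ?_
  rw [Lagrange.nodalWeight_eq_eval_derivative_nodal (Finset.mem_univ k), hP]
  have : Polynomial.eval (r k) (Polynomial.derivative P) =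
      (n : ℂ) * r k ^ (n - 1) + γ * ((n : ℂ) - m) * r k ^ (n - m - 1) := by
    simp [P, Polynomial.derivative_X_pow, Nat.cast_sub hmn.le]
    ring
  rw [this, Pi.one_apply]
  ring

theorem andrade_no_root (α γ : ℝ) (hα : 0 < α) (hα1 : α < 1) (hγ : 0 < γ) (w : ℂ)
    (hw : |w.im| ≤ Real.pi) :
    Complex.exp w + γ * Complex.exp ((1 - α) * w) + 1 ≠ 0 := by
  intro h
  have hpi := Real.pi_pos
  have him : ((1 - α) * w : ℂ).im = (1 - α) * w.im := by simp
  have hre : ((1 - α) * w : ℂ).re = (1 - α) * w.re := by simp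
  have h1 : Real.exp w.re * Real.sin w.im + γ * (Real.exp ((1-α) * w.re) * Real.sin ((1-α) * w.im)) = 0 := by
    have := congrArg Complex.im h
    simpa [Complex.exp_im, him, hre] using this
  have h2 : Real.exp w.re * Real.cos w.im + γ * (Real.exp ((1-α) * w.re) * Real.cos ((1-α) * w.im)) + 1 = 0 := by
    have := congrArg Complex.re h
    simpa [Complex.exp_re, him, hre] using this
  obtain ⟨l, u⟩ := abs_le.1 hw
  rcases lt_trichotomy w.im 0 with hi | hi | hi
  · have s1 : Real.sin w.im ≤ 0 := Real.sin_nonpos_of_nonpos_of_neg_pi_le hi.le l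
    have s2 : Real.sin ((1-α) * w.im) < 0 :=
      Real.sin_neg_of_neg_of_neg_pi_lt (by nlinarith) (by nlinarith)
    have a := mul_nonpos_of_nonneg_of_nonpos (Real.exp_pos w.re).le s1
    have b := mul_neg_of_pos_of_neg hγ (mul_neg_of_pos_of_neg (Real.exp_pos ((1-α) * w.re)) s2)
    linarith
  · rw [hi] at h2
    simp only [mul_zero, Real.cos_zero, mul_one] at h2
    have := Real.exp_pos w.re
    have := mul_pos hγ (Real.exp_pos ((1-α) * w.re))
    linarith
  · have s1 : 0 ≤ Real.sin w.im := Real.sin_nonneg_of_nonneg_of_le_pi hi.le u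
    have s2 : 0 < Real.sin ((1-α) * w.im) :=
      Real.sin_pos_of_pos_of_lt_pi (mul_pos (by linarith) hi) (by nlinarith)
    have a := mul_nonneg (Real.exp_pos w.re).le s1
    have b := mul_pos hγ (mul_pos (Real.exp_pos ((1-α) * w.re)) s2)
    linarith

/-- squared modulus of the symbol on the cut -/
noncomputable def andD (α γ x : ℝ) : ℝ :=
  (1 - Real.exp x - γ * Real.exp ((1 - α) * x) * Real.cos (Real.pi * α)) ^ 2 +
    (γ * Real.exp ((1 - α) * x) * Real.sin (Real.pi * α)) ^ 2

theorem andD_lower (α γ : ℝ) (hα : 0 < α) (hα1 : α < 1) (hγ : 0 < γ) :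
    ∃ δ > 0, ∀ x, δ ≤ andD α γ x := by
  have hs : 0 < Real.sin (Real.pi * α) :=
    Real.sin_pos_of_pos_of_lt_pi (by positivity) (by nlinarith [Real.pi_pos])
  set s := Real.sin (Real.pi * α) with hsd
  set k := Real.cos (Real.pi * α) with hkd
  have hsk : s ^ 2 + k ^ 2 = 1 := Real.sin_sq_add_cos_sq _
  refine ⟨min ((1/2 * s) ^ 2) ((γ * (1/2) * s) ^ 2), lt_min (by positivity) (by positivity), fun x => ?_⟩
  unfold andD
  rw [← hsd, ← hkd]
  set B := γ * Real.exp ((1 - α) * x) with hB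
  set A := 1 - Real.exp x with hA
  by_cases hx : Real.exp x ≤ 1/2
  · refine (min_le_left _ _).trans ?_
    have e : (A - B * k) ^ 2 + (B * s) ^ 2 = (A * s) ^ 2 + (A * k - B) ^ 2 := by
      linear_combination (B ^ 2 - A ^ 2) * hsk
    rw [e]
    have : 1/2 ≤ A := by linarith
    have : (1/2 * s) ^ 2 ≤ (A * s) ^ 2 := by gcongr
    nlinarith [sq_nonneg (A * k - B)]
  · refine (min_le_right _ _).trans ?_
    push Not at hx
    have hexp : 1/2 ≤ Real.exp ((1 - α) * x) := by
      by_cases h0 : 0 ≤ x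
      · have := Real.one_le_exp (x := (1 - α) * x) (mul_nonneg (by linarith) h0)
        linarith
      · push Not at h0
        refine hx.le.trans (Real.exp_le_exp.2 ?_)
        nlinarith
    have : (γ * (1/2) * s) ^ 2 ≤ (B * s) ^ 2 := by rw [hB]; gcongr
    nlinarith [sq_nonneg (A - B * k)]

theorem andD_tendsto (α γ : ℝ) (hα1 : α < 1) : Tendsto (andD α γ) atBot (nhds 1) := by
  have a2 : Tendsto (fun v : ℝ => Real.exp ((1 - α) * v)) atBot (nhds 0) := by
    apply Real.tendsto_exp_atBot.comp
    exact tendsto_id.const_mul_atBot (by linarith)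
  have h1 := (((tendsto_const_nhds (x := (1:ℝ))).sub Real.tendsto_exp_atBot).sub
    ((a2.const_mul γ).mul_const (Real.cos (Real.pi * α)))).pow 2
  have h2 := ((a2.const_mul γ).mul_const (Real.sin (Real.pi * α))).pow 2
  have := h1.add h2
  unfold andD
  simpa using this

theorem and_jump (α γ x : ℝ) (hα : 0 < α) (hα1 : α < 1) (hγ : 0 < γ) :
    (Complex.exp (x + (Real.pi : ℝ) * Complex.I) +
      γ * Complex.exp ((1 - α) * (x + (Real.pi : ℝ) * Complex.I)) + 1)⁻¹ -
    (Complex.exp (x + (-Real.pi : ℝ) * Complex.I) +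
      γ * Complex.exp ((1 - α) * (x + (-Real.pi : ℝ) * Complex.I)) + 1)⁻¹ =
    -(2 * Complex.I) * ((γ * Real.exp ((1 - α) * x) * Real.sin (Real.pi * α) / andD α γ x : ℝ) : ℂ) := by
  have hpi := Real.pi_pos
  have n1 := andrade_no_root α γ hα hα1 hγ (x + (Real.pi : ℝ) * Complex.I) (by simp [abs_of_pos hpi])
  have n2 := andrade_no_root α γ hα hα1 hγ (x + (-Real.pi : ℝ) * Complex.I) (by simp [abs_of_pos hpi])
  obtain ⟨δ, hδ, hD⟩ := andD_lower α γ hα hα1 hγ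
  have hD0 : (andD α γ x : ℂ) ≠ 0 := by
    exact_mod_cast (hδ.trans_le (hD x)).ne'
  have h1 (σ : ℝ) : Complex.exp ((1 - α) * (x + σ * Complex.I)) =
      (Real.exp ((1-α) * x) : ℂ) * ((Real.cos ((1-α) * σ) : ℂ) + (Real.sin ((1-α) * σ) : ℂ) * Complex.I) := by
    rw [Complex.ofReal_cos, Complex.ofReal_sin, ← Complex.exp_mul_I, Complex.ofReal_exp, ← Complex.exp_add]
    push_cast; ring_nf
  have e1 : (1 - α) * -Real.pi = -((1-α) * Real.pi) := by ring
  have e2 : (1 - α) * Real.pi = Real.pi - Real.pi * α := by ring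
  rw [h1, (exp_line x).1] at n1 ⊢
  rw [h1, (exp_line x).2] at n2 ⊢
  rw [e1, Real.cos_neg, Real.sin_neg] at n2 ⊢
  rw [e2, Real.sin_pi_sub, Real.cos_pi_sub] at n1 n2 ⊢
  rw [inv_sub_inv n1 n2, Complex.ofReal_div, ← mul_div_assoc]
  congr 1
  · push_cast; ring
  · unfold andD
    push_cast
    linear_combination (-((γ:ℂ) * Complex.exp ((1 - α) * x) * Complex.sin (Real.pi * α)) ^ 2) * Complex.I_sq

theorem andrade_core (m n : ℕ) (hm : 0 < m) (hmn : m < n) (γ α : ℝ) (hγ : 0 < γ)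
    (hα : α = (m : ℝ) / n)
    (r : Fin n → ℂ) (hr : Function.Injective r)
    (hroot : ∀ k, r k ^ n + (γ : ℂ) * r k ^ (n - m) + 1 = 0) (T : ℝ) (hT : 0 < T) :
    ((T ^ (2 - α) : ℝ) : ℂ) * (((T ^ ((1 : ℝ) / n - 1) : ℝ) : ℂ) *
      ∑ k, mittagLeffler ((1 : ℝ) / n) ((1 : ℝ) / n) (r k * ((T ^ ((1 : ℝ) / n) : ℝ) : ℂ)) /
          ((n : ℂ) * r k ^ (n - 1) + (γ : ℂ) * ((n : ℂ) - m) * r k ^ (n - m - 1))) =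
    ((γ * Real.sin (Real.pi * α) / Real.pi *
      ∫ v : ℝ, Real.exp (-Real.exp v) * Real.exp ((2 - α) * v) / andD α γ (v - Real.log T) : ℝ) : ℂ) := by
  have hn : 0 < n := by omega
  have hnR : (0 : ℝ) < n := by exact_mod_cast hn
  have hnC : (n : ℂ) ≠ 0 := by exact_mod_cast hn.ne'
  have hα0 : 0 < α := by rw [hα]; positivity
  have hα1 : α < 1 := by rw [hα, div_lt_one hnR]; exact_mod_cast hmn
  have hpi := Real.pi_pos
  -- the polynomial at `exp (w / n)`
  have hp (w : ℂ) : Complex.exp (w / n) ^ n + (γ : ℂ) * Complex.exp (w / n) ^ (n - m) + 1 =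
      Complex.exp w + γ * Complex.exp ((1 - α) * w) + 1 := by
    rw [← Complex.exp_nat_mul, ← Complex.exp_nat_mul, mul_div_cancel₀ _ hnC, Nat.cast_sub hmn.le, hα]
    congr 4
    push_cast
    field_simp
  have hns (w : ℂ) (hw : |w.im| ≤ Real.pi) (k : Fin n) : Complex.exp (w / n) ≠ r k := by
    intro h
    have := hroot k
    rw [← h, hp] at this
    exact andrade_no_root α γ hα0 hα1 hγ w hw this
  have hr0 (k : Fin n) : r k ≠ 0 := by
    intro h
    have := hroot k
    rw [h, zero_pow hn.ne', zero_pow (by omega)] at this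
    simp at this
  set L := Real.log T with hL
  set S : ℝ := T ^ ((1 : ℝ) / n) with hS
  have hS0 : 0 < S := Real.rpow_pos_of_pos hT _
  have hSC : (S : ℂ) ≠ 0 := by exact_mod_cast hS0.ne'
  have hSL : (S : ℂ) = Complex.exp (L / n) := by
    rw [hS, Real.rpow_def_of_pos hT, Complex.ofReal_exp, ← hL]
    push_cast
    ring_nf
  have hdivS (w : ℂ) : Complex.exp (w / n) = Complex.exp ((w - L) / n) * S := by
    rw [hSL, ← Complex.exp_add]; ring_nf
  have him (w : ℂ) : (w - L).im = w.im := by simp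
  have hml (k : Fin n) := mittagLeffler_integral n hn (r k * S) (mul_ne_zero (hr0 k) hSC) (by
    intro w hw h
    rw [hdivS] at h
    exact hns (w - L) (by rwa [him]) k (mul_right_cancel₀ hSC h))
  set d : Fin n → ℂ := fun k => (n : ℂ) * r k ^ (n - 1) + (γ : ℂ) * ((n : ℂ) - m) * r k ^ (n - m - 1) with hd
  have hsum (w : ℂ) (hw : |w.im| ≤ Real.pi) : ∑ k, (Complex.exp (w / n) - r k * S)⁻¹ / d k =
      (S : ℂ)⁻¹ * (Complex.exp (w - L) + γ * Complex.exp ((1 - α) * (w - L)) + 1)⁻¹ := by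
    rw [← hp, ← andrade_partial_fractions m n hm hmn γ r hr hroot _
      (fun k => hns (w - L) (by rwa [him]) k), Finset.mul_sum]
    refine Finset.sum_congr rfl fun k _ => ?_
    rw [hdivS, ← sub_mul, mul_inv]
    ring
  have hpsi (v : ℝ) : ∑ k, hkPsi (hkZ n (r k * S)) v / d k =
      (2 * Complex.I * ((S⁻¹ * γ * Real.sin (Real.pi * α) * Real.exp (-((1 - α) * L)) : ℝ) : ℂ)) *
        ((Real.exp (-Real.exp v) * Real.exp ((2 - α) * v) / andD α γ (v - L) : ℝ) : ℂ) := by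
    have h1 := hsum (v + (Real.pi : ℝ) * Complex.I) (by simp [abs_of_pos hpi])
    have h2 := hsum (v + (-Real.pi : ℝ) * Complex.I) (by simp [abs_of_pos hpi])
    have h3 := and_jump α γ (v - L) hα0 hα1 hγ
    have e (σ : ℝ) : ((v : ℂ) + σ * Complex.I - L) = ((v - L : ℝ) : ℂ) + σ * Complex.I := by
      push_cast; ring
    rw [e] at h1 h2
    have h4 : ∑ k, hkPsi (hkZ n (r k * S)) v / d k =
        ((Real.exp (-Real.exp v) * Real.exp v : ℝ) : ℂ) * (-1) *
        (∑ k, (Complex.exp ((v + (Real.pi : ℝ) * Complex.I) / n) - r k * S)⁻¹ / d k -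
        ∑ k, (Complex.exp ((v + (-Real.pi : ℝ) * Complex.I) / n) - r k * S)⁻¹ / d k) := by
      rw [← Finset.sum_sub_distrib, Finset.mul_sum]
      refine Finset.sum_congr rfl fun k _ => ?_
      rw [hkZ_psi]
      ring
    rw [h4, h1, h2, ← mul_sub, h3]
    have h5 : Real.exp ((1 - α) * (v - L)) * Real.exp v =
        Real.exp (-((1 - α) * L)) * Real.exp ((2 - α) * v) := by
      rw [← Real.exp_add, ← Real.exp_add]; ring_nf
    have h6 : (Real.exp (-Real.exp v) * Real.exp v) * S⁻¹ *
        (γ * Real.exp ((1 - α) * (v - L)) * Real.sin (Real.pi * α) / andD α γ (v - L)) =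
        (S⁻¹ * γ * Real.sin (Real.pi * α) * Real.exp (-((1 - α) * L))) *
        (Real.exp (-Real.exp v) * Real.exp ((2 - α) * v) / andD α γ (v - L)) := by
      linear_combination (Real.exp (-Real.exp v) * S⁻¹ * γ * Real.sin (Real.pi * α) / andD α γ (v - L)) * h5
    have h7 := congrArg (fun x : ℝ => (x : ℂ)) h6
    simp only [Complex.ofReal_mul _ (Real.exp (-Real.exp v) * Real.exp ((2 - α) * v) / andD α γ (v - L)),
      Complex.ofReal_mul _ (γ * Real.exp ((1 - α) * (v - L)) * Real.sin (Real.pi * α) / andD α γ (v - L)),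
      Complex.ofReal_mul _ S⁻¹] at h7
    rw [Complex.ofReal_inv] at h7
    linear_combination (2 * Complex.I) * h7
  have hE : (∑ k, mittagLeffler ((1 : ℝ) / n) ((1 : ℝ) / n) (r k * (S : ℂ)) / d k) * (2 * Real.pi * Complex.I) =
      (2 * Complex.I * ((S⁻¹ * γ * Real.sin (Real.pi * α) * Real.exp (-((1 - α) * L)) : ℝ) : ℂ)) *
        ((∫ v : ℝ, Real.exp (-Real.exp v) * Real.exp ((2 - α) * v) / andD α γ (v - L) : ℝ) : ℂ) := by
    rw [← integral_complex_ofReal, ← MeasureTheory.integral_const_mul]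
    simp_rw [← hpsi]
    rw [MeasureTheory.integral_finsetSum _ (fun k _ => (hml k).1.div_const _), Finset.sum_mul]
    refine Finset.sum_congr rfl fun k _ => ?_
    rw [MeasureTheory.integral_div, ← (hml k).2]
    ring
  set J : ℝ := ∫ v : ℝ, Real.exp (-Real.exp v) * Real.exp ((2 - α) * v) / andD α γ (v - L) with hJ
  have hpow : T ^ (2 - α) * T ^ ((1 : ℝ) / n - 1) * S⁻¹ * Real.exp (-((1 - α) * L)) = 1 := by
    have : Real.exp (-((1 - α) * L)) = T ^ (-(1 - α)) := by
      rw [Real.rpow_def_of_pos hT, ← hL]; ring_nf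
    rw [this, hS, ← Real.rpow_neg hT.le, ← Real.rpow_add hT, ← Real.rpow_add hT, ← Real.rpow_add hT]
    ring_nf
    exact Real.rpow_zero T
  have hpowC : ((T ^ (2 - α) : ℝ) : ℂ) * ((T ^ ((1 : ℝ) / n - 1) : ℝ) : ℂ) * (S : ℂ)⁻¹ *
      ((Real.exp (-((1 - α) * L)) : ℝ) : ℂ) = 1 := by
    have := congrArg (fun x : ℝ => (x : ℂ)) hpow
    simpa only [Complex.ofReal_mul, Complex.ofReal_inv, Complex.ofReal_one] using this
  have h2pi : (2 * Real.pi * Complex.I : ℂ) ≠ 0 := Complex.two_pi_I_ne_zero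
  have hpiC : (Real.pi : ℂ) ≠ 0 := by exact_mod_cast hpi.ne'
  apply mul_right_cancel₀ h2pi
  rw [mul_assoc, mul_assoc, hE]
  simp only [Complex.ofReal_mul, Complex.ofReal_div, Complex.ofReal_inv]
  have hfin : (γ : ℂ) * (Real.sin (Real.pi * α) : ℝ) / Real.pi * (J : ℂ) * (2 * Real.pi * Complex.I) =
      (γ : ℂ) * (Real.sin (Real.pi * α) : ℝ) * (J : ℂ) * (2 * Complex.I) := by
    field_simp
  rw [hfin]
  linear_combination ((γ : ℂ) * (Real.sin (Real.pi * α) : ℝ) * (J : ℂ) * (2 * Complex.I)) * hpowC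

theorem andrade_limit (α γ : ℝ) (hα : 0 < α) (hα1 : α < 1) (hγ : 0 < γ) :
    Tendsto (fun L : ℝ => ∫ v : ℝ, Real.exp (-Real.exp v) * Real.exp ((2 - α) * v) / andD α γ (v - L))
      atTop (nhds (Real.Gamma (2 - α))) := by
  obtain ⟨δ, hδ, hD⟩ := andD_lower α γ hα hα1 hγ
  rw [← expGamma_integral (2 - α) (by linarith)]
  refine MeasureTheory.tendsto_integral_filter_of_dominated_convergence
    (fun v => Real.exp (-Real.exp v) * Real.exp ((2 - α) * v) / δ) ?_ ?_ ?_ ?_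
  · refine Eventually.of_forall fun L => Continuous.aestronglyMeasurable ?_
    refine Continuous.div (by fun_prop) (by unfold andD; fun_prop) fun v => ?_
    exact (hδ.trans_le (hD _)).ne'
  · refine Eventually.of_forall fun L => MeasureTheory.ae_of_all _ fun v => ?_
    have h1 := hD (v - L)
    have h2 := hδ.trans_le h1
    rw [Real.norm_of_nonneg (by positivity)]
    gcongr
  · exact (expGamma_integrable (2 - α) (by linarith)).div_const _
  · refine MeasureTheory.ae_of_all _ fun v => ?_
    have h1 : Tendsto (fun L : ℝ => v - L) atTop atBot :=
      tendsto_atBot_add_const_left _ v tendsto_neg_atTop_atBot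
    have := (tendsto_const_nhds (x := Real.exp (-Real.exp v) * Real.exp ((2 - α) * v))).div
      ((andD_tendsto α γ hα1).comp h1) one_ne_zero
    rw [div_one] at this
    exact this

theorem andrade_const (α : ℝ) (hα : 0 < α) (hα1 : α < 1) :
    Real.Gamma (1 + α) * Real.sin (Real.pi * α) / Real.pi * Real.Gamma (2 - α) = α * (1 - α) := by
  have hs : Real.sin (Real.pi * α) ≠ 0 := by
    apply ne_of_gt
    exact Real.sin_pos_of_pos_of_lt_pi (by positivity) (by nlinarith [Real.pi_pos])
  have h1 : Real.Gamma (1 + α) = α * Real.Gamma α := by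
    rw [add_comm, Real.Gamma_add_one hα.ne']
  have h2 : Real.Gamma (2 - α) = (1 - α) * Real.Gamma (1 - α) := by
    rw [← Real.Gamma_add_one (by linarith)]; ring_nf
  have h3 := Real.Gamma_mul_Gamma_one_sub α
  rw [eq_div_iff hs] at h3
  rw [h1, h2, div_mul_eq_mul_div, div_eq_iff Real.pi_ne_zero]
  linear_combination α * (1 - α) * h3

/-- **Asymptotic behaviour of the Andrade relaxation modulus as `t → +∞`**:
with `α = m/n`, `(t/τ)^{2−α} G_{m/n}(t) → μα(1−α)` as `t → +∞`, i.e.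
`G_{m/n}(t) ≈ μα(1−α)(t/τ)^{α−2}` as `t → +∞`. -/
theorem andrade_relaxation_modulus_asymptotic_infty (m n : ℕ) (hm : 0 < m) (hmn : m < n)
    (μ τ : ℝ) (hμ : 0 < μ) (hτ : 0 < τ)
    (r : Fin n → ℂ) (hr : Function.Injective r)
    (hroot : ∀ k, r k ^ n + (Real.Gamma (1 + (m : ℝ) / n) : ℂ) * r k ^ (n - m) + 1 = 0)
    (G : ℝ → ℂ)
    (hG : ∀ t : ℝ, 0 < t → G t =
      (μ : ℂ) * (((t / τ) ^ ((1 : ℝ) / n - 1) : ℝ) : ℂ) *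
        ∑ k, mittagLeffler ((1 : ℝ) / n) ((1 : ℝ) / n)
            (r k * (((t / τ) ^ ((1 : ℝ) / n) : ℝ) : ℂ)) /
          ((n : ℂ) * r k ^ (n - 1) +
            (Real.Gamma (1 + (m : ℝ) / n) : ℂ) * ((n : ℂ) - m) * r k ^ (n - m - 1))) :
    Filter.Tendsto
      (fun t : ℝ => (((t / τ) ^ (2 - (m : ℝ) / n) : ℝ) : ℂ) * G t)
      Filter.atTop
      (nhds ((μ * ((m : ℝ) / n) * (1 - (m : ℝ) / n) : ℝ) : ℂ)) := by
  set α : ℝ := (m : ℝ) / n with hα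
  have hnR : (0 : ℝ) < n := by exact_mod_cast (by omega : 0 < n)
  have hα0 : 0 < α := by rw [hα]; positivity
  have hα1 : α < 1 := by rw [hα, div_lt_one hnR]; exact_mod_cast hmn
  have hγ : 0 < Real.Gamma (1 + α) := Real.Gamma_pos_of_pos (by linarith)
  have hlog : Tendsto (fun t : ℝ => Real.log (t / τ)) atTop atTop :=
    Real.tendsto_log_atTop.comp (tendsto_id.atTop_div_const hτ)
  have h1 := ((andrade_limit α _ hα0 hα1 hγ).comp hlog).const_mul
    (μ * (Real.Gamma (1 + α) * Real.sin (Real.pi * α) / Real.pi))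
  have hc : μ * (Real.Gamma (1 + α) * Real.sin (Real.pi * α) / Real.pi) * Real.Gamma (2 - α) =
      μ * α * (1 - α) := by
    rw [mul_assoc, andrade_const α hα0 hα1, mul_assoc]
  rw [hc] at h1
  refine ((Complex.continuous_ofReal.tendsto _).comp h1).congr' ?_
  filter_upwards [eventually_gt_atTop 0] with t ht
  have h2 := andrade_core m n hm hmn (Real.Gamma (1 + α)) α hγ hα r hr hroot (t / τ) (div_pos ht hτ)
  rw [hG t ht, mul_assoc (μ : ℂ), mul_left_comm, h2]
  simp only [Function.comp_apply]
  rw [← Complex.ofReal_mul, mul_assoc]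
end

section
/- Let 0 < m < n be integers, μ, τ > 0, and suppose the polynomial p_{n,m}(r) = r^n + Γ(1 + m/n) r^{n−m} + 1 has n pairwise distinct complex roots r_1, …, r_n, and let G_{m/n} be the Andrade relaxation modulus; write α = m/n. Then G_{m/n} satisfies the Volterra integral equation of the second kind: for every t > 0, G_{m/n}(t) = μ − (1/τ) ∫₀^t [1 + α((t−x)/τ)^{α−1}] G_{m/n}(x) dx. -/
open MeasureTheory Set Finset

/-- The Riemann–Liouville kernel. -/
noncomputable def rlKer (d s : ℝ) : ℝ := s ^ (d - 1) / Real.Gamma d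

lemma rlKer_pos {d s : ℝ} (hd : 0 < d) (hs : 0 < s) : 0 < rlKer d s :=
  div_pos (Real.rpow_pos_of_pos hs _) (Real.Gamma_pos_of_pos hd)

lemma rlKer_nonneg {d s : ℝ} (hd : 0 < d) (hs : 0 ≤ s) : 0 ≤ rlKer d s :=
  div_nonneg (Real.rpow_nonneg hs _) (Real.Gamma_pos_of_pos hd).le

lemma rlKer_one (s : ℝ) : rlKer 1 s = 1 := by
  simp [rlKer]

lemma rlKer_conv_integral {b d s : ℝ} (hb : 0 < b) (hd : 0 < d) (hs : 0 < s) :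
    ∫ y in (0:ℝ)..s, rlKer b (s - y) * rlKer d y = rlKer (b + d) s := by
  have hGb := (Real.Gamma_pos_of_pos hb).ne'
  have hGd := (Real.Gamma_pos_of_pos hd).ne'
  have hGbd := (Real.Gamma_pos_of_pos (add_pos hd hb)).ne'
  have h1 := Complex.betaIntegral_scaled (d : ℂ) (b : ℂ) hs
  have h2 := Complex.Gamma_mul_Gamma_eq_betaIntegral (s := (d : ℂ)) (t := (b : ℂ))
    (by simpa using hd) (by simpa using hb)
  have h3 : ∫ x in (0:ℝ)..s, (x:ℂ) ^ ((d:ℂ) - 1) * ((s:ℂ) - x) ^ ((b:ℂ) - 1)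
      = ((∫ x in (0:ℝ)..s, x ^ (d - 1) * (s - x) ^ (b - 1) : ℝ) : ℂ) := by
    rw [← intervalIntegral.integral_ofReal]
    apply intervalIntegral.integral_congr
    intro x hx
    rw [Set.uIcc_of_le hs.le] at hx
    simp only [Complex.ofReal_mul]
    rw [Complex.ofReal_cpow hx.1, Complex.ofReal_cpow (sub_nonneg.2 hx.2)]
    push_cast
    rfl
  have h4 : (∫ x in (0:ℝ)..s, x ^ (d - 1) * (s - x) ^ (b - 1))
      = s ^ (d + b - 1) * (Real.Gamma d * Real.Gamma b / Real.Gamma (d + b)) := by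
    rw [h3] at h1
    have h5 : Complex.betaIntegral (d:ℂ) (b:ℂ)
        = ((Real.Gamma d * Real.Gamma b / Real.Gamma (d + b) : ℝ) : ℂ) := by
      rw [Complex.Gamma_ofReal, Complex.Gamma_ofReal, ← Complex.ofReal_add,
        Complex.Gamma_ofReal] at h2
      have : ((Real.Gamma (d + b) : ℝ) : ℂ) ≠ 0 := by exact_mod_cast hGbd
      push_cast
      rw [eq_div_iff this, h2]
      ring
    rw [h5] at h1
    have h6 : ((s:ℂ) ^ ((d:ℂ) + b - 1)) = ((s ^ (d + b - 1) : ℝ) : ℂ) := by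
      rw [Complex.ofReal_cpow hs.le]; push_cast; rfl
    rw [h6] at h1
    exact_mod_cast h1
  have h7 : (fun y => rlKer b (s - y) * rlKer d y)
      = fun y => (1 / (Real.Gamma b * Real.Gamma d)) * (y ^ (d - 1) * (s - y) ^ (b - 1)) := by
    funext y
    unfold rlKer
    field_simp
  rw [h7, intervalIntegral.integral_const_mul, h4, rlKer, add_comm b d]
  field_simp

lemma rlKer_conv_integrable {b d s : ℝ} (hb : 0 < b) (hd : 0 < d) (hs : 0 < s) :
    IntervalIntegrable (fun y => rlKer b (s - y) * rlKer d y) volume 0 s := by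
  by_contra h
  have := rlKer_conv_integral hb hd hs
  rw [intervalIntegral.integral_undef h] at this
  exact (rlKer_pos (add_pos hb hd) hs).ne this

lemma gamma_lower {R x : ℝ} (hR : 0 < R) (hx : 1 ≤ x) :
    Real.exp (-R) * R ^ (x - 1) ≤ Real.Gamma x := by
  have hx0 : 0 < x := by linarith
  rw [Real.Gamma_eq_integral hx0]
  have hi := Real.GammaIntegral_convergent hx0
  have hsub : Set.Ioi R ⊆ Set.Ioi (0:ℝ) := Set.Ioi_subset_Ioi hR.le
  calc Real.exp (-R) * R ^ (x - 1) = ∫ y in Set.Ioi R, Real.exp (-y) * R ^ (x - 1) := by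
        rw [integral_mul_const, integral_exp_neg_Ioi]
    _ ≤ ∫ y in Set.Ioi R, Real.exp (-y) * y ^ (x - 1) := by
        refine setIntegral_mono_on ?_ (hi.mono_set hsub) measurableSet_Ioi ?_
        · exact (integrableOn_exp_neg_Ioi R).mul_const _
        · intro y hy
          have : R ≤ y := le_of_lt hy
          have h1 : 0 ≤ x - 1 := by linarith
          gcongr
    _ ≤ _ := by
        refine setIntegral_mono_set hi ?_ hsub.eventuallyLE
        refine (ae_restrict_iff' measurableSet_Ioi).2 (Filter.Eventually.of_forall ?_)
        intro y hy
        have : (0:ℝ) < y := hy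
        simp only [Pi.zero_apply]
        positivity

lemma summable_rlKer {a b R s : ℝ} (ha : 0 < a) (hb : 0 ≤ b) (hR : 0 < R) (hs : 0 < s) :
    Summable (fun j : ℕ => R ^ j * rlKer (b + a * (j + 1)) s) := by
  -- choose `M` with `M ^ a = 2 R s ^ a`
  set q : ℝ := R * s ^ a with hq
  have hq0 : 0 < q := by positivity
  set M : ℝ := (2 * q) ^ (1 / a) with hM
  have hM0 : 0 < M := by positivity
  have hMa : M ^ a = 2 * q := by
    rw [hM, ← Real.rpow_mul (by positivity), one_div_mul_cancel ha.ne', Real.rpow_one]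
  have hgeo : Summable (fun j : ℕ => (Real.exp M * (s / M) ^ (b + a - 1)) * (1 / 2 : ℝ) ^ j) :=
    (summable_geometric_of_lt_one (by norm_num) (by norm_num)).mul_left _
  refine Summable.of_norm_bounded_eventually_nat hgeo ?_
  have hev : ∀ᶠ j : ℕ in Filter.atTop, 1 / a ≤ (j : ℝ) :=
    tendsto_natCast_atTop_atTop.eventually_ge_atTop _
  filter_upwards [hev] with j hj
  have hj1 : 1 ≤ a * j := by
    rw [div_le_iff₀ ha] at hj; linarith
  have hd1 : 1 ≤ b + a * (j + 1) := by nlinarith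
  have hd0 : 0 < b + a * ((j:ℝ) + 1) := by linarith
  rw [Real.norm_of_nonneg (mul_nonneg (by positivity) (rlKer_nonneg hd0 hs.le))]
  have hG := gamma_lower hM0 hd1
  have e1 : ∀ x : ℝ, 0 < x → x ^ (b + a * ((j:ℝ) + 1) - 1) = x ^ (b + a - 1) * (x ^ a) ^ j := by
    intro x hx
    rw [← Real.rpow_natCast, ← Real.rpow_mul hx.le, ← Real.rpow_add hx]
    congr 1; ring
  unfold rlKer
  have hlow : 0 < Real.exp (-M) * M ^ (b + a * ((j:ℝ) + 1) - 1) := by positivity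
  calc R ^ j * (s ^ (b + a * ((j:ℝ) + 1) - 1) / Real.Gamma (b + a * (j + 1)))
      ≤ R ^ j * (s ^ (b + a * ((j:ℝ) + 1) - 1) / (Real.exp (-M) * M ^ (b + a * ((j:ℝ) + 1) - 1))) := by
        gcongr
    _ = _ := by
        rw [e1 s hs, e1 M hM0, hMa, Real.div_rpow hs.le hM0.le, Real.exp_neg, hq]
        have : s ^ a ≠ 0 := by positivity
        have : M ^ (b + a - 1) ≠ 0 := by positivity
        simp only [mul_pow, one_div, inv_pow]
        field_simp

lemma conv_series {a α g C R s : ℝ} (ha : 0 < a) (hα : 0 < α) (hg : 0 < g) (hR : 0 < R)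
    (hs : 0 < s) (c : ℕ → ℂ) (hc : ∀ j, ‖c j‖ ≤ C * R ^ j) :
    HasSum (fun j : ℕ => c j * ((rlKer (1 + a * (j + 1)) s + g * rlKer (α + a * (j + 1)) s : ℝ) : ℂ))
      (∫ y in (0:ℝ)..s, ((1 + g * rlKer α (s - y) : ℝ) : ℂ)
        * ∑' j : ℕ, c j * ((rlKer (a * (j + 1)) y : ℝ) : ℂ)) := by
  have hd : ∀ j : ℕ, 0 < a * ((j:ℝ) + 1) := fun j => by positivity
  set F : ℕ → ℝ → ℝ := fun j y => (1 + g * rlKer α (s - y)) * rlKer (a * (j + 1)) y with hF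
  have hFe : ∀ j, F j = fun y => rlKer 1 (s - y) * rlKer (a * (j + 1)) y
      + g * (rlKer α (s - y) * rlKer (a * (j + 1)) y) := by
    intro j; funext y; simp only [hF, rlKer_one]; ring
  have hFint : ∀ j, IntervalIntegrable (F j) volume 0 s := by
    intro j
    rw [hFe]
    exact (rlKer_conv_integrable one_pos (hd j) hs).add
      ((rlKer_conv_integrable hα (hd j) hs).const_mul g)
  have hFval : ∀ j : ℕ, ∫ y in (0:ℝ)..s, F j y
      = rlKer (1 + a * (j + 1)) s + g * rlKer (α + a * (j + 1)) s := by
    intro j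
    rw [hFe, intervalIntegral.integral_add (rlKer_conv_integrable one_pos (hd j) hs)
      ((rlKer_conv_integrable hα (hd j) hs).const_mul g), intervalIntegral.integral_const_mul,
      rlKer_conv_integral one_pos (hd j) hs, rlKer_conv_integral hα (hd j) hs]
  have hFnn : ∀ j, ∀ y ∈ Set.Ioc 0 s, 0 ≤ F j y := by
    intro j y hy
    have h1 := rlKer_nonneg (hd j) hy.1.le
    have h2 := rlKer_nonneg hα (sub_nonneg.2 hy.2)
    simp only [hF]; positivity
  have hnorm : ∀ j : ℕ, ∫ y in Set.Ioc 0 s, ‖c j * ((F j y : ℝ) : ℂ)‖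
      = ‖c j‖ * (rlKer (1 + a * (j + 1)) s + g * rlKer (α + a * (j + 1)) s) := by
    intro j
    rw [← hFval, intervalIntegral.integral_of_le hs.le, ← integral_const_mul]
    refine setIntegral_congr_fun measurableSet_Ioc ?_
    intro y hy
    simp only [norm_mul, Complex.norm_real, Real.norm_of_nonneg (hFnn j y hy)]
  have hsum : Summable (fun j : ℕ =>
      ‖c j‖ * (rlKer (1 + a * (j + 1)) s + g * rlKer (α + a * (j + 1)) s)) := by
    refine Summable.of_nonneg_of_le (f := fun j : ℕ => C * (R ^ j * rlKer (1 + a * (j + 1)) s)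
        + C * g * (R ^ j * rlKer (α + a * (j + 1)) s)) ?_ ?_ ?_
    · intro j
      have h1 := rlKer_nonneg (add_pos one_pos (hd j)) hs.le
      have h2 := rlKer_nonneg (add_pos hα (hd j)) hs.le
      positivity
    · intro j
      have h1 := rlKer_nonneg (add_pos one_pos (hd j)) hs.le
      have h2 := rlKer_nonneg (add_pos hα (hd j)) hs.le
      have h3 : 0 ≤ rlKer (1 + a * (j + 1)) s + g * rlKer (α + a * (j + 1)) s := by positivity
      have := mul_le_mul_of_nonneg_right (hc j) h3
      linarith
    · exact ((summable_rlKer ha zero_le_one hR hs).mul_left C).add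
        ((summable_rlKer ha hα.le hR hs).mul_left (C * g))
  have key := hasSum_integral_of_summable_integral_norm (μ := volume.restrict (Set.Ioc 0 s))
    (F := fun (j : ℕ) y => c j * ((F j y : ℝ) : ℂ))
    (fun j => ((hFint j).1.ofReal (𝕜 := ℂ)).const_mul (c j))
    (by simp_rw [hnorm]; exact hsum)
  have e1 : (fun j : ℕ => c j *
        ((rlKer (1 + a * (j + 1)) s + g * rlKer (α + a * (j + 1)) s : ℝ) : ℂ))
      = fun j : ℕ => ∫ y in Set.Ioc 0 s, c j * ((F j y : ℝ) : ℂ) := by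
    funext j
    rw [integral_const_mul, ← hFval, intervalIntegral.integral_of_le hs.le]
    congr 1
    exact (integral_ofReal (𝕜 := ℂ)).symm
  have e2 : (∫ y in (0:ℝ)..s, ((1 + g * rlKer α (s - y) : ℝ) : ℂ)
        * ∑' j : ℕ, c j * ((rlKer (a * (j + 1)) y : ℝ) : ℂ))
      = ∫ y in Set.Ioc 0 s, ∑' j : ℕ, c j * ((F j y : ℝ) : ℂ) := by
    rw [intervalIntegral.integral_of_le hs.le]
    congr 1
    funext y
    rw [← tsum_mul_left]
    congr 1
    funext j
    simp only [hF]
    push_cast; ring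
  rw [e1, e2]
  exact key

lemma root_sums (m n : ℕ) (hm : 0 < m) (hmn : m < n) (γ : ℂ) (r : Fin n → ℂ)
    (hr : Function.Injective r) (hroot : ∀ k, r k ^ n + γ * r k ^ (n - m) + 1 = 0) (j : ℕ)
    (hj : j < n) :
    ∑ k, r k ^ j / ((n : ℂ) * r k ^ (n - 1) + γ * ((n : ℂ) - m) * r k ^ (n - m - 1))
      = if j = n - 1 then 1 else 0 := by
  classical
  open Polynomial in
  have hp : (X ^ n + C γ * X ^ (n - m) + 1 : ℂ[X]) = Lagrange.nodal Finset.univ r := by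
    have hdeg : (C γ * X ^ (n - m) + 1 : ℂ[X]).degree < n := by
      refine (degree_add_le _ _).trans_lt (max_lt ?_ ?_)
      · refine (degree_C_mul_X_pow_le _ _).trans_lt ?_
        exact_mod_cast (by omega : n - m < n)
      · rw [degree_one]; exact_mod_cast (by omega : 0 < n)
    have hmon : (X ^ n + C γ * X ^ (n - m) + 1 : ℂ[X]).Monic := by
      rw [add_assoc]
      exact monic_X_pow_add hdeg
    have hd : (X ^ n + C γ * X ^ (n - m) + 1 : ℂ[X]).degree = n := by
      rw [add_assoc, degree_add_eq_left_of_degree_lt] <;> simp [hdeg]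
    refine eq_of_degree_sub_lt_of_eval_finset_eq (Finset.univ.image r) ?_ ?_
    · rw [Finset.card_image_of_injective _ hr, Finset.card_univ, Fintype.card_fin, ← hd]
      refine degree_sub_lt_left ?_ hmon.ne_zero ?_
      · rw [hd, Lagrange.degree_nodal, Finset.card_univ, Fintype.card_fin]
      · rw [hmon.leadingCoeff, Lagrange.nodal_monic.leadingCoeff]
    · intro x hx
      obtain ⟨k, -, rfl⟩ := Finset.mem_image.1 hx
      rw [Lagrange.eval_nodal_at_node (Finset.mem_univ k)]
      simpa using hroot k
  have hder : ∀ k, (n : ℂ) * r k ^ (n - 1) + γ * ((n : ℂ) - m) * r k ^ (n - m - 1)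
      = ∏ i ∈ Finset.univ.erase k, (r k - r i) := by
    intro k
    rw [← Lagrange.eval_nodal, ← Lagrange.eval_nodal_derivative_eval_node_eq (Finset.mem_univ k),
      ← hp]
    simp [Polynomial.derivative_X_pow, Nat.cast_sub hmn.le]
    ring
  have h := Lagrange.coeff_eq_sum (s := Finset.univ) (v := r) hr.injOn
    (P := (Polynomial.X ^ j : Polynomial ℂ)) (by simpa using hj)
  simp only [Finset.card_univ, Fintype.card_fin, Polynomial.coeff_X_pow, Polynomial.eval_pow,
    Polynomial.eval_X] at h
  simp_rw [hder]
  rw [← h]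
  simp [eq_comm]

/-- **Volterra integral equation for the Andrade relaxation modulus**:
with `α = m/n`, for every `t > 0`,
`G_{m/n}(t) = μ − (1/τ) ∫₀^t [1 + α((t−x)/τ)^{α−1}] G_{m/n}(x) dx`. -/
theorem andrade_relaxation_modulus_volterra (m n : ℕ) (hm : 0 < m) (hmn : m < n)
    (μ τ : ℝ) (hμ : 0 < μ) (hτ : 0 < τ)
    (r : Fin n → ℂ) (hr : Function.Injective r)
    (hroot : ∀ k, r k ^ n + (Real.Gamma (1 + (m : ℝ) / n) : ℂ) * r k ^ (n - m) + 1 = 0)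
    (G : ℝ → ℂ)
    (hG : ∀ t : ℝ, 0 < t → G t =
      (μ : ℂ) * (((t / τ) ^ ((1 : ℝ) / n - 1) : ℝ) : ℂ) *
        ∑ k, mittagLeffler ((1 : ℝ) / n) ((1 : ℝ) / n)
            (r k * (((t / τ) ^ ((1 : ℝ) / n) : ℝ) : ℂ)) /
          ((n : ℂ) * r k ^ (n - 1) +
            (Real.Gamma (1 + (m : ℝ) / n) : ℂ) * ((n : ℂ) - m) * r k ^ (n - m - 1))) :
    ∀ t : ℝ, 0 < t →
      G t = (μ : ℂ) - (1 / (τ : ℂ)) *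
        ∫ x in (0:ℝ)..t,
          (((1 + ((m : ℝ) / n) * (((t - x) / τ) ^ ((m : ℝ) / n - 1))) : ℝ) : ℂ) * G x := by
  intro t ht
  have hn : 0 < n := hm.trans hmn
  have hnR : (0:ℝ) < n := by exact_mod_cast hn
  have hmR : (0:ℝ) < m := by exact_mod_cast hm
  set a : ℝ := (1:ℝ) / n with ha_def
  set α : ℝ := (m:ℝ) / n with hα_def
  have ha : 0 < a := by positivity
  have hα : 0 < α := by positivity
  have han : a * n = 1 := by rw [ha_def]; field_simp
  have ham : a * m = α := by rw [ha_def, hα_def]; field_simp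
  set g : ℝ := Real.Gamma (1 + α) with hg_def
  have hg : 0 < g := Real.Gamma_pos_of_pos (by linarith)
  set D : Fin n → ℂ := fun k => (n : ℂ) * r k ^ (n - 1) +
            (g : ℂ) * ((n : ℂ) - m) * r k ^ (n - m - 1) with hD
  set c : ℕ → ℂ := fun j => ∑ k, r k ^ j / D k with hc_def
  set e : ℕ → ℝ → ℝ := fun j s => rlKer (a * (j + 1)) s with he_def
  -- coefficient facts
  have hc_small : ∀ j, j < n → c j = if j = n - 1 then 1 else 0 := fun j hj =>
    root_sums m n hm hmn (g : ℂ) r hr hroot j hj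
  have hc_rec : ∀ j, c (j + n) + g * c (j + (n - m)) + c j = 0 := by
    intro j
    simp only [hc_def]
    rw [Finset.mul_sum, ← Finset.sum_add_distrib, ← Finset.sum_add_distrib]
    refine Finset.sum_eq_zero fun k _ => ?_
    have : r k ^ (j + n) / D k + g * (r k ^ (j + (n - m)) / D k) + r k ^ j / D k
        = r k ^ j * (r k ^ n + g * r k ^ (n - m) + 1) / D k := by
      rw [pow_add, pow_add]; ring
    rw [this, hroot k]; simp
  set R : ℝ := 1 + ∑ k, ‖r k‖ with hR_def
  have hrR : ∀ k, ‖r k‖ ≤ R := by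
    intro k
    have := Finset.single_le_sum (f := fun k => ‖r k‖) (fun i _ => norm_nonneg _) (Finset.mem_univ k)
    linarith
  have hR : 0 < R := by positivity
  set C : ℝ := ∑ k, ‖D k‖⁻¹ with hC_def
  have hc_bd : ∀ j, ‖c j‖ ≤ C * R ^ j := by
    intro j
    rw [hC_def, Finset.sum_mul]
    refine (norm_sum_le _ _).trans (Finset.sum_le_sum fun k _ => ?_)
    rw [norm_div, norm_pow, div_eq_inv_mul]
    have := hrR k
    gcongr
  have he_pos : ∀ j s, 0 < s → 0 < e j s := fun j s hs => rlKer_pos (by positivity) hs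
  have hsumR : ∀ s, 0 < s → Summable (fun j : ℕ => R ^ j * e j s) := by
    intro s hs
    simpa [he_def] using summable_rlKer ha le_rfl hR hs
  -- the modulus as a series
  have hG' : ∀ x : ℝ, 0 < x → G x = (μ : ℂ) * ∑' j : ℕ, c j * ((e j (x / τ) : ℝ) : ℂ) := by
    intro x hx
    rw [hG x hx, mul_assoc]
    congr 1
    set s := x / τ with hs_def
    have hs : 0 < s := div_pos hx hτ
    have hterm : ∀ (k : Fin n) (j : ℕ), ((s ^ (a - 1) : ℝ) : ℂ) *
        ((r k * ((s ^ a : ℝ) : ℂ)) ^ j / (Real.Gamma (a + a * j) : ℂ) / D k)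
        = r k ^ j / D k * ((e j s : ℝ) : ℂ) := by
      intro k j
      have : e j s = s ^ (a - 1) * (s ^ a) ^ j / Real.Gamma (a + a * j) := by
        simp only [he_def, rlKer]
        rw [← Real.rpow_natCast, ← Real.rpow_mul hs.le, ← Real.rpow_add hs]
        congr 2 <;> ring
      rw [this]
      push_cast
      rw [mul_pow]
      ring
    have hsm : ∀ k, Summable (fun j : ℕ => r k ^ j / D k * ((e j s : ℝ) : ℂ)) := by
      intro k
      refine Summable.of_norm_bounded ((hsumR s hs).mul_left (‖D k‖⁻¹)) ?_
      intro j
      rw [norm_mul, norm_div, norm_pow, Complex.norm_real, Real.norm_of_nonneg (he_pos j s hs).le,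
        div_eq_inv_mul, mul_assoc]
      have := hrR k
      have := (he_pos j s hs).le
      gcongr
    rw [Finset.mul_sum]
    simp only [hc_def, Finset.sum_mul]
    rw [Summable.tsum_finsetSum (fun k _ => hsm k)]
    refine Finset.sum_congr rfl fun k _ => ?_
    simp only [← hterm]
    rw [tsum_mul_left, tsum_div_const]
    rfl
  set s := t / τ with hs_def
  have hs : 0 < s := div_pos ht hτ
  have hconv := conv_series ha hα hg hR hs c hc_bd
  -- the integral
  have hint : (1 / (τ : ℂ)) *
        ∫ x in (0:ℝ)..t, (((1 + α * (((t - x) / τ) ^ (α - 1))) : ℝ) : ℂ) * G x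
      = (μ : ℂ) * ∫ y in (0:ℝ)..s, ((1 + g * rlKer α (s - y) : ℝ) : ℂ)
        * ∑' j : ℕ, c j * ((rlKer (a * (j + 1)) y : ℝ) : ℂ) := by
    set H : ℝ → ℂ := fun y => (μ : ℂ) * (((1 + g * rlKer α (s - y) : ℝ) : ℂ)
        * ∑' j : ℕ, c j * ((rlKer (a * (j + 1)) y : ℝ) : ℂ)) with hH
    have h1 : ∫ x in (0:ℝ)..t, (((1 + α * (((t - x) / τ) ^ (α - 1))) : ℝ) : ℂ) * G x
        = ∫ x in (0:ℝ)..t, H (x / τ) := by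
      rw [intervalIntegral.integral_of_le ht.le, intervalIntegral.integral_of_le ht.le]
      refine setIntegral_congr_fun measurableSet_Ioc ?_
      intro x hx
      simp only [hH]
      rw [hG' x hx.1]
      have : α * (((t - x) / τ) ^ (α - 1)) = g * rlKer α (s - x / τ) := by
        rw [hg_def, add_comm, Real.Gamma_add_one hα.ne', rlKer, hs_def, sub_div]
        have := (Real.Gamma_pos_of_pos hα).ne'
        field_simp
      rw [this]
      ring
    have hτC : (τ : ℂ) ≠ 0 := by exact_mod_cast hτ.ne'
    rw [h1, intervalIntegral.integral_comp_div H hτ.ne', zero_div, ← intervalIntegral.integral_const_mul,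
      Complex.real_smul]
    rw [← mul_assoc, one_div_mul_cancel hτC, one_mul]
  rw [hint, hG' t ht, ← hconv.tsum_eq, ← hs_def]
  -- summability of shifted series
  have hs1 : Summable (fun j : ℕ => c j * ((e j s : ℝ) : ℂ)) := by
    refine Summable.of_norm_bounded ((hsumR s hs).mul_left C) ?_
    intro j
    rw [norm_mul, Complex.norm_real, Real.norm_of_nonneg (he_pos j s hs).le, ← mul_assoc]
    exact mul_le_mul_of_nonneg_right (hc_bd j) (he_pos j s hs).le
  have hshift : ∀ (l : ℕ) (b : ℝ), a * l = b → ∀ j : ℕ, rlKer (b + a * (j + 1)) s = e (j + l) s := by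
    intro l b hb j
    simp only [he_def]
    rw [← hb]; congr 1; push_cast; ring
  have hsh : ∀ (b : ℝ), 0 < b → Summable (fun j : ℕ => c j * ((rlKer (b + a * (j + 1)) s : ℝ) : ℂ)) := by
    intro b hb
    refine Summable.of_norm_bounded ((summable_rlKer ha hb.le hR hs).mul_left C) ?_
    intro j
    have h0 : 0 ≤ rlKer (b + a * (j + 1)) s := rlKer_nonneg (by positivity) hs.le
    rw [norm_mul, Complex.norm_real, Real.norm_of_nonneg h0, ← mul_assoc]
    exact mul_le_mul_of_nonneg_right (hc_bd j) h0
  have hsn := hsh 1 one_pos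
  have hsm := hsh α hα
  simp only [hshift n 1 han] at hsn
  simp only [hshift m α ham] at hsm
  simp only [hshift n 1 han, hshift m α ham]
  have hsplit : ∑' j : ℕ, c j * ((e (j + n) s + g * e (j + m) s : ℝ) : ℂ)
      = ∑' j : ℕ, c j * ((e (j + n) s : ℝ) : ℂ) + g * ∑' j : ℕ, c j * ((e (j + m) s : ℝ) : ℂ) := by
    rw [← tsum_mul_left, ← hsn.tsum_add (hsm.mul_left _)]
    congr 1; funext j; push_cast; ring
  have hA : ∑' j : ℕ, c j * ((e j s : ℝ) : ℂ)
      = 1 + ∑' j : ℕ, c (j + n) * ((e (j + n) s : ℝ) : ℂ) := by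
    rw [← hs1.sum_add_tsum_nat_add n]
    congr 1
    rw [Finset.sum_eq_single (n - 1)]
    · rw [hc_small _ (by omega), if_pos rfl, one_mul]
      have : a * (((n - 1 : ℕ) : ℝ) + 1) = 1 := by
        rw [Nat.cast_sub hn]; push_cast; rw [sub_add_cancel, han]
      simp only [he_def, this, rlKer_one, Complex.ofReal_one]
    · intro j hj hj1
      rw [hc_small _ (Finset.mem_range.1 hj), if_neg hj1, zero_mul]
    · intro h; exact absurd (Finset.mem_range.2 (by omega)) h
  have hB : ∑' j : ℕ, c j * ((e (j + m) s : ℝ) : ℂ)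
      = ∑' j : ℕ, c (j + (n - m)) * ((e (j + n) s : ℝ) : ℂ) := by
    rw [← hsm.sum_add_tsum_nat_add (n - m), Finset.sum_eq_zero, zero_add]
    · congr 1; funext j
      rw [show j + (n - m) + m = j + n by omega]
    · intro j hj
      have := Finset.mem_range.1 hj
      rw [hc_small _ (by omega), if_neg (by omega), zero_mul]
  have hs2 : Summable (fun j : ℕ => c (j + n) * ((e (j + n) s : ℝ) : ℂ)) :=
    (summable_nat_add_iff n).2 hs1
  have hs3 : Summable (fun j : ℕ => c (j + (n - m)) * ((e (j + n) s : ℝ) : ℂ)) := by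
    have := (summable_nat_add_iff (n - m)).2 hsm
    refine this.congr fun j => ?_
    rw [show j + (n - m) + m = j + n by omega]
  have hZ : ∑' j : ℕ, c (j + n) * ((e (j + n) s : ℝ) : ℂ)
      + g * ∑' j : ℕ, c (j + (n - m)) * ((e (j + n) s : ℝ) : ℂ)
      + ∑' j : ℕ, c j * ((e (j + n) s : ℝ) : ℂ) = 0 := by
    rw [← tsum_mul_left, ← hs2.tsum_add (hs3.mul_left _), ← (hs2.add (hs3.mul_left _)).tsum_add hsn]
    convert tsum_zero using 2
    funext j
    linear_combination ((e (j + n) s : ℝ) : ℂ) * hc_rec j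
  rw [hsplit, hA, hB]
  linear_combination (μ : ℂ) * hZ
end
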